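/- Let ψ₃(w,z,x,y) = −(2σ/3)(wx+zy)^{−3} + (y/w)²(wx+zy)^{−1}. Then ψ₃ satisfies the curved wave equation ψ_{xw} + ψ_{yz} + 2σ(wx+zy)^{−3}(z²ψ_{xx} + w²ψ_{yy} − 2wzψ_{xy}) = 0 on the region where w ≠ 0 and wx+zy ≠ 0. -/

import Mathlib

/-- Partial derivative with respect to the first variable `w`. -/
noncomputable def pw (f : ℂ → ℂ → ℂ → ℂ → ℂ) : ℂ → ℂ → ℂ → ℂ → ℂ :=
  fun w z x y => deriv (fun t => f t z x y) w

/-- Partial derivative with respect to the second variable `z`. -/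
noncomputable def pz (f : ℂ → ℂ → ℂ → ℂ → ℂ) : ℂ → ℂ → ℂ → ℂ → ℂ :=
  fun w z x y => deriv (fun t => f w t x y) z

/-- Partial derivative with respect to the third variable `x`. -/
noncomputable def px (f : ℂ → ℂ → ℂ → ℂ → ℂ) : ℂ → ℂ → ℂ → ℂ → ℂ :=
  fun w z x y => deriv (fun t => f w z t y) x

/-- Partial derivative with respect to the fourth variable `y`. -/
noncomputable def py (f : ℂ → ℂ → ℂ → ℂ → ℂ) : ℂ → ℂ → ℂ → ℂ → ℂ :=
  fun w z x y => deriv (fun t => f w z x t) y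

/-
Put `u = wx + zy` and `v = y / w`. The quadratic part of the curved wave operator is the square of
`L = z ∂_x - w ∂_y`, and `L u = 0`, `L v = -1`; so on a function `Φ(u, v)` it acts as `∂_v²`.
For the flat part, `v` does not involve `z` or `x` and is homogeneous of degree `0` in `(w, y)`,
so all `v`-derivatives cancel in `∂_x ∂_w + ∂_y ∂_z`, leaving `u ∂_u² + 2 ∂_u = ∂_u² ∘ u`.
The curved wave equation for `Φ(u, v)` is thus `∂_u² (u Φ) + 2σ u⁻³ ∂_v² Φ = 0`. For
`Φ = A u⁻³ + v² u⁻¹` the two terms are `6 A u⁻⁴` and `4σ u⁻⁴`, whence `A = -2σ/3`.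
-/

open Filter Topology

section SecondOrderChainRule

variable {𝕜 E F : Type*} [NontriviallyNormedField 𝕜] [NormedAddCommGroup E] [NormedSpace 𝕜 E]
  [NormedAddCommGroup F] [NormedSpace 𝕜 F] {Φ : E → F} {t : 𝕜}

theorem hasDerivAt_of_eq_fderiv_apply {γ V : 𝕜 → E} {γ' V' : E} {g : 𝕜 → F}
    (hγ : HasDerivAt γ γ' t) (hV : HasDerivAt V V' t) (hΦ : ContDiffAt 𝕜 2 Φ (γ t))
    (hg : ∀ s, DifferentiableAt 𝕜 Φ (γ s) → g s = fderiv 𝕜 Φ (γ s) (V s)) :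
    HasDerivAt g (fderiv 𝕜 (fderiv 𝕜 Φ) (γ t) γ' (V t) + fderiv 𝕜 Φ (γ t) V') t := by
  have hfderiv : DifferentiableAt 𝕜 (fderiv 𝕜 Φ) (γ t) :=
    (hΦ.fderiv_right (m := 1) (by norm_num)).differentiableAt one_ne_zero
  have hdiff : ∀ᶠ s in 𝓝 t, DifferentiableAt 𝕜 Φ (γ s) :=
    hγ.continuousAt.eventually <|
      (hΦ.eventually (by simp)).mono fun _ h ↦ h.differentiableAt two_ne_zero
  exact ((hfderiv.hasFDerivAt.comp_hasDerivAt t hγ).clm_apply hV).congr_of_eventuallyEq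
    (hdiff.mono hg)

theorem iteratedDeriv_two_comp_of_hasDerivAt_const {γ : 𝕜 → E} {e : E}
    (hγ : ∀ s, HasDerivAt γ e s) (hΦ : ContDiffAt 𝕜 2 Φ (γ t)) :
    iteratedDeriv 2 (fun s ↦ Φ (γ s)) t = fderiv 𝕜 (fderiv 𝕜 Φ) (γ t) e e := by
  have hderiv : HasDerivAt (deriv fun s ↦ Φ (γ s)) _ t :=
    hasDerivAt_of_eq_fderiv_apply (hγ t) (hasDerivAt_const t e) hΦ
      fun s hs ↦ (hs.hasFDerivAt.comp_hasDerivAt s (hγ s)).deriv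
  simpa [iteratedDeriv_succ] using hderiv.deriv

theorem iteratedDeriv_two_id_mul {f : 𝕜 → 𝕜} (hf : ContDiffAt 𝕜 2 f t) :
    iteratedDeriv 2 (fun s ↦ s * f s) t = t * iteratedDeriv 2 f t + 2 * deriv f t := by
  rw [iteratedDeriv_fun_mul (f := fun s ↦ s) contDiffAt_id hf]
  simp [Finset.sum_range_succ, iteratedDeriv_fun_id]

theorem iteratedDeriv_two_fst_mul {Φ : 𝕜 × E → 𝕜} {b : E} (hΦ : ContDiffAt 𝕜 2 Φ (t, b)) :
    iteratedDeriv 2 (fun s ↦ s * Φ (s, b)) t =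
      t * fderiv 𝕜 (fderiv 𝕜 Φ) (t, b) (1, 0) (1, 0) + 2 * fderiv 𝕜 Φ (t, b) (1, 0) := by
  have hline (s : 𝕜) : HasDerivAt (fun s ↦ (s, b)) ((1 : 𝕜), (0 : E)) s :=
    (hasDerivAt_id s).prodMk (hasDerivAt_const s b)
  have hderiv : deriv (fun s ↦ Φ (s, b)) t = fderiv 𝕜 Φ (t, b) (1, 0) :=
    ((hΦ.differentiableAt two_ne_zero).hasFDerivAt.comp_hasDerivAt t (hline t)).deriv
  have hΦ_line : ContDiffAt 𝕜 2 (fun s ↦ Φ (s, b)) t :=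
    hΦ.comp t (f := fun s ↦ (s, b)) (by fun_prop)
  rw [iteratedDeriv_two_id_mul hΦ_line, iteratedDeriv_two_comp_of_hasDerivAt_const hline hΦ, hderiv]

end SecondOrderChainRule

/-- The pair `(u, v) = (wx + zy, y / w)`, in terms of which `ψ₃` and the potential `σ / u` are
expressed. -/
noncomputable def sparlingTodCoords (w z x y : ℂ) : ℂ × ℂ :=
  (w * x + z * y, y / w)

/-- The function `Φ (u, v)` of `u = wx + zy` and `v = y / w`, as a function of `(w, z, x, y)`. It is
curried so that `pw`, `pz`, `px` and `py` apply to it. -/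
noncomputable def sparlingTodPullback (Φ : ℂ × ℂ → ℂ) : ℂ → ℂ → ℂ → ℂ → ℂ :=
  fun w z x y ↦ Φ (sparlingTodCoords w z x y)

section SparlingTodCoords

variable (w z x y : ℂ)

theorem hasDerivAt_sparlingTodCoords_w {w : ℂ} (hw : w ≠ 0) :
    HasDerivAt (fun t ↦ sparlingTodCoords t z x y) (x, -y / w ^ 2) w := by
  have hu : HasDerivAt (fun t ↦ t * x + z * y) x w :=
    (hasDerivAt_mul_const x).add_const (z * y)
  have hv : HasDerivAt (fun t ↦ y / t) (-y / w ^ 2) w := by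
    simpa [div_eq_mul_inv] using (hasDerivAt_inv hw).const_mul y
  exact hu.prodMk hv

theorem hasDerivAt_sparlingTodCoords_z :
    HasDerivAt (fun t ↦ sparlingTodCoords w t x y) (y, 0) z :=
  ((hasDerivAt_mul_const y).const_add (w * x)).prodMk (hasDerivAt_const z (y / w))

theorem hasDerivAt_sparlingTodCoords_x :
    HasDerivAt (fun t ↦ sparlingTodCoords w z t y) (w, 0) x :=
  ((hasDerivAt_const_mul w).add_const (z * y)).prodMk (hasDerivAt_const x (y / w))

theorem hasDerivAt_sparlingTodCoords_y :
    HasDerivAt (fun t ↦ sparlingTodCoords w z x t) (z, 1 / w) y :=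
  ((hasDerivAt_const_mul z).const_add (w * x)).prodMk ((hasDerivAt_id y).div_const w)

end SparlingTodCoords

section SparlingTodPullback

variable {w z x y : ℂ} {Φ : ℂ × ℂ → ℂ}

theorem pw_sparlingTodPullback (hw : w ≠ 0)
    (hΦ : DifferentiableAt ℂ Φ (sparlingTodCoords w z x y)) :
    pw (sparlingTodPullback Φ) w z x y =
      fderiv ℂ Φ (sparlingTodCoords w z x y) (x, -y / w ^ 2) :=
  (hΦ.hasFDerivAt.comp_hasDerivAt w (hasDerivAt_sparlingTodCoords_w z x y hw)).deriv

theorem pz_sparlingTodPullback (hΦ : DifferentiableAt ℂ Φ (sparlingTodCoords w z x y)) :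
    pz (sparlingTodPullback Φ) w z x y = fderiv ℂ Φ (sparlingTodCoords w z x y) (y, 0) :=
  (hΦ.hasFDerivAt.comp_hasDerivAt z (hasDerivAt_sparlingTodCoords_z w z x y)).deriv

theorem px_sparlingTodPullback (hΦ : DifferentiableAt ℂ Φ (sparlingTodCoords w z x y)) :
    px (sparlingTodPullback Φ) w z x y = fderiv ℂ Φ (sparlingTodCoords w z x y) (w, 0) :=
  (hΦ.hasFDerivAt.comp_hasDerivAt x (hasDerivAt_sparlingTodCoords_x w z x y)).deriv

theorem py_sparlingTodPullback (hΦ : DifferentiableAt ℂ Φ (sparlingTodCoords w z x y)) :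
    py (sparlingTodPullback Φ) w z x y = fderiv ℂ Φ (sparlingTodCoords w z x y) (z, 1 / w) :=
  (hΦ.hasFDerivAt.comp_hasDerivAt y (hasDerivAt_sparlingTodCoords_y w z x y)).deriv

theorem px_pw_sparlingTodPullback (hw : w ≠ 0)
    (hΦ : ContDiffAt ℂ 2 Φ (sparlingTodCoords w z x y)) :
    px (pw (sparlingTodPullback Φ)) w z x y =
      fderiv ℂ (fderiv ℂ Φ) (sparlingTodCoords w z x y) (w, 0) (x, -y / w ^ 2) +
        fderiv ℂ Φ (sparlingTodCoords w z x y) (1, 0) :=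
  (hasDerivAt_of_eq_fderiv_apply (hasDerivAt_sparlingTodCoords_x w z x y)
    ((hasDerivAt_id' x).prodMk (hasDerivAt_const x (-y / w ^ 2))) hΦ
    fun _ ↦ pw_sparlingTodPullback hw).deriv

theorem py_pz_sparlingTodPullback (hΦ : ContDiffAt ℂ 2 Φ (sparlingTodCoords w z x y)) :
    py (pz (sparlingTodPullback Φ)) w z x y =
      fderiv ℂ (fderiv ℂ Φ) (sparlingTodCoords w z x y) (z, 1 / w) (y, 0) +
        fderiv ℂ Φ (sparlingTodCoords w z x y) (1, 0) :=
  (hasDerivAt_of_eq_fderiv_apply (hasDerivAt_sparlingTodCoords_y w z x y)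
    ((hasDerivAt_id' y).prodMk (hasDerivAt_const y (0 : ℂ))) hΦ
    fun _ ↦ pz_sparlingTodPullback).deriv

theorem px_px_sparlingTodPullback (hΦ : ContDiffAt ℂ 2 Φ (sparlingTodCoords w z x y)) :
    px (px (sparlingTodPullback Φ)) w z x y =
      fderiv ℂ (fderiv ℂ Φ) (sparlingTodCoords w z x y) (w, 0) (w, 0) :=
  (hasDerivAt_of_eq_fderiv_apply (hasDerivAt_sparlingTodCoords_x w z x y)
    (hasDerivAt_const x (w, 0)) hΦ fun _ ↦ px_sparlingTodPullback).deriv.trans (by simp)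

theorem py_py_sparlingTodPullback (hΦ : ContDiffAt ℂ 2 Φ (sparlingTodCoords w z x y)) :
    py (py (sparlingTodPullback Φ)) w z x y =
      fderiv ℂ (fderiv ℂ Φ) (sparlingTodCoords w z x y) (z, 1 / w) (z, 1 / w) :=
  (hasDerivAt_of_eq_fderiv_apply (hasDerivAt_sparlingTodCoords_y w z x y)
    (hasDerivAt_const y (z, 1 / w)) hΦ fun _ ↦ py_sparlingTodPullback).deriv.trans (by simp)

theorem px_py_sparlingTodPullback (hΦ : ContDiffAt ℂ 2 Φ (sparlingTodCoords w z x y)) :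
    px (py (sparlingTodPullback Φ)) w z x y =
      fderiv ℂ (fderiv ℂ Φ) (sparlingTodCoords w z x y) (w, 0) (z, 1 / w) :=
  (hasDerivAt_of_eq_fderiv_apply (hasDerivAt_sparlingTodCoords_x w z x y)
    (hasDerivAt_const x (z, 1 / w)) hΦ fun _ ↦ py_sparlingTodPullback).deriv.trans (by simp)

theorem px_pw_add_py_pz_sparlingTodPullback (hw : w ≠ 0)
    (hΦ : ContDiffAt ℂ 2 Φ (sparlingTodCoords w z x y)) :
    px (pw (sparlingTodPullback Φ)) w z x y + py (pz (sparlingTodPullback Φ)) w z x y =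
      iteratedDeriv 2 (fun s ↦ s * Φ (s, y / w)) (w * x + z * y) := by
  set H := fderiv ℂ (fderiv ℂ Φ) (sparlingTodCoords w z x y)
  have hsymm : H (z, 1 / w) (y, 0) = H (y, 0) (z, 1 / w) :=
    hΦ.isSymmSndFDerivAt (by simp) (z, 1 / w) (y, 0)
  have hdir : w • (x, -y / w ^ 2) + y • (z, 1 / w) = (w * x + z * y) • ((1 : ℂ), (0 : ℂ)) := by
    ext
    · simp [mul_comm]
    · simp only [Prod.snd_add, Prod.smul_snd, smul_eq_mul]
      field_simp
      ring
  have htrace : H (w, 0) (x, -y / w ^ 2) + H (y, 0) (z, 1 / w) =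
      (w * x + z * y) * H (1, 0) (1, 0) :=
    calc
      _ = H (w • (1, 0)) (x, -y / w ^ 2) + H (y • (1, 0)) (z, 1 / w) := by simp
      _ = H (1, 0) (w • (x, -y / w ^ 2) + y • (z, 1 / w)) := by
        simp only [map_add, map_smul, smul_apply]
      _ = (w * x + z * y) * H (1, 0) (1, 0) := by rw [hdir, map_smul, smul_eq_mul]
  rw [px_pw_sparlingTodPullback hw hΦ, py_pz_sparlingTodPullback hΦ, hsymm,
    iteratedDeriv_two_fst_mul hΦ, ← sparlingTodCoords]
  linear_combination htrace

theorem sq_mul_px_px_add_sq_mul_py_py_sub_sparlingTodPullback (hw : w ≠ 0)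
    (hΦ : ContDiffAt ℂ 2 Φ (sparlingTodCoords w z x y)) :
    z ^ 2 * px (px (sparlingTodPullback Φ)) w z x y +
        w ^ 2 * py (py (sparlingTodPullback Φ)) w z x y -
        2 * w * z * px (py (sparlingTodPullback Φ)) w z x y =
      iteratedDeriv 2 (fun t ↦ Φ (w * x + z * y, t)) (y / w) := by
  set H := fderiv ℂ (fderiv ℂ Φ) (sparlingTodCoords w z x y)
  have hsnd : iteratedDeriv 2 (fun t ↦ Φ (w * x + z * y, t)) (y / w) = H (0, 1) (0, 1) :=
    iteratedDeriv_two_comp_of_hasDerivAt_const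
      (fun s ↦ (hasDerivAt_const s (w * x + z * y)).prodMk (hasDerivAt_id s)) hΦ
  have hsymm : H (z, 1 / w) (w, 0) = H (w, 0) (z, 1 / w) :=
    hΦ.isSymmSndFDerivAt (by simp) (z, 1 / w) (w, 0)
  have hdir : ((0 : ℂ), (1 : ℂ)) = w • (z, 1 / w) - z • (w, 0) := by
    ext <;> simp [hw, mul_comm]
  rw [px_px_sparlingTodPullback hΦ, py_py_sparlingTodPullback hΦ, px_py_sparlingTodPullback hΦ,
    hsnd, hdir]
  simp only [map_sub, map_smul, sub_apply, smul_apply, smul_eq_mul, hsymm]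
  ring

theorem curvedWave_sparlingTodPullback (σ : ℂ) (hw : w ≠ 0)
    (hΦ : ContDiffAt ℂ 2 Φ (sparlingTodCoords w z x y)) :
    px (pw (sparlingTodPullback Φ)) w z x y + py (pz (sparlingTodPullback Φ)) w z x y
      + 2 * σ / (w * x + z * y) ^ 3 *
        (z ^ 2 * px (px (sparlingTodPullback Φ)) w z x y
          + w ^ 2 * py (py (sparlingTodPullback Φ)) w z x y
          - 2 * w * z * px (py (sparlingTodPullback Φ)) w z x y) =
      iteratedDeriv 2 (fun s ↦ s * Φ (s, y / w)) (w * x + z * y)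
        + 2 * σ / (w * x + z * y) ^ 3 *
          iteratedDeriv 2 (fun t ↦ Φ (w * x + z * y, t)) (y / w) := by
  rw [px_pw_add_py_pz_sparlingTodPullback hw hΦ,
    sq_mul_px_px_add_sq_mul_py_py_sub_sparlingTodPullback hw hΦ]

end SparlingTodPullback

/-- The function `A u⁻³ + v² u⁻¹`, which is `ψ₃` in the coordinates `(u, v)` when `A = -2σ/3`. -/
noncomputable def psi3Profile (A : ℂ) (p : ℂ × ℂ) : ℂ :=
  A / p.1 ^ 3 + p.2 ^ 2 / p.1

section Psi3Profile

variable (A u v : ℂ)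

theorem contDiffAt_psi3Profile {p : ℂ × ℂ} (hp : p.1 ≠ 0) : ContDiffAt ℂ 2 (psi3Profile A) p := by
  unfold psi3Profile
  fun_prop (disch := simp [hp])

theorem iteratedDeriv_two_fst_mul_psi3Profile {u : ℂ} (hu : u ≠ 0) :
    iteratedDeriv 2 (fun s ↦ s * psi3Profile A (s, v)) u = 6 * A / u ^ 4 := by
  have hprod : (fun s ↦ s * psi3Profile A (s, v)) =ᶠ[𝓝 u]
      fun s ↦ v ^ 2 + A * s ^ (-2 : ℤ) := by
    filter_upwards [eventually_ne_nhds hu] with s hs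
    simp only [psi3Profile]
    field_simp
    ring
  rw [hprod.iteratedDeriv_eq, iteratedDeriv_const_add two_pos, iteratedDeriv_const_mul_field,
    iteratedDeriv_eq_iterate, iter_deriv_zpow]
  simp only [Int.reduceNeg, Int.cast_neg, Int.cast_ofNat, Nat.cast_ofNat, Int.reduceSub, zpow_neg,
    zpow_ofNat]
  field_simp
  ring

theorem iteratedDeriv_two_snd_psi3Profile :
    iteratedDeriv 2 (fun t ↦ psi3Profile A (u, t)) v = 2 / u := by
  simp [psi3Profile, iteratedDeriv_const_add, iteratedDeriv_div_const]

end Psi3Profile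

/-- ψ₃ = −(2σ/3)(wx+zy)⁻³ + (y/w)²(wx+zy)⁻¹ satisfies the curved wave
equation on the Sparling–Tod background, where w ≠ 0 and wx+zy ≠ 0. -/
theorem curved_wave_sparlingTod_psi3 (σ : ℂ) (w z x y : ℂ)
    (hw : w ≠ 0) (h : w * x + z * y ≠ 0) :
    let ψ : ℂ → ℂ → ℂ → ℂ → ℂ := fun w z x y =>
      -(2 * σ / 3) / (w * x + z * y) ^ 3 + (y / w) ^ 2 / (w * x + z * y)
    px (pw ψ) w z x y + py (pz ψ) w z x y
      + 2 * σ / (w * x + z * y) ^ 3 *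
        (z ^ 2 * px (px ψ) w z x y + w ^ 2 * py (py ψ) w z x y
          - 2 * w * z * px (py ψ) w z x y) = 0 := by
  intro ψ
  have hψ : ψ = sparlingTodPullback (psi3Profile (-(2 * σ / 3))) := rfl
  rw [hψ, curvedWave_sparlingTodPullback σ hw (contDiffAt_psi3Profile _ h),
    iteratedDeriv_two_fst_mul_psi3Profile _ _ h, iteratedDeriv_two_snd_psi3Profile]
  field_simp
  ring
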